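/- arXiv:1705.07193 — 2 statements merged into one kernel-verified Lean document; each statement's English description precedes it below -/
import Mathlib

section
/- Let N be a positive integer, let f : ℕ → ℂ be arbitrary, and let g : ℕ → ℂ be a truncated divisor sum g(m) = Σ_{q | m, q ≤ Q} g'(q) for some fixed Q, with finite Ramanujan expansion g(m) = Σ_{q ≤ Q} 𝑔̂(q)·c_q(m). Then for every positive integer ℓ the limit lim_{x→∞} (1/x)·Σ_{h ≤ x} C_{f,g}(N,h)·c_ℓ(h) exists and equals 𝑔̂(ℓ)·Σ_{n ≤ N} f(n)·c_ℓ(n). -/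
/-- The Ramanujan sum `c_q(n) = ∑_{d ∣ gcd(q,n)} d · μ(q/d)`. -/
def ramanujanSum (q : ℕ) (n : ℤ) : ℤ :=
  ∑ d ∈ (Nat.gcd q n.natAbs).divisors, (d : ℤ) * ArithmeticFunction.moebius (q / d)

open Filter Topology in
lemma mean_modEq (r v : ℕ) (hr : 0 < r) :
    Tendsto (fun x : ℕ => (1 / (x : ℂ)) * ∑ h ∈ Finset.Icc 1 x,
      (if h ≡ v [MOD r] then (1 : ℂ) else 0)) atTop (𝓝 (1 / (r : ℂ))) := by
  have key : ∀ x : ℕ, ‖(∑ h ∈ Finset.Icc 1 x,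
      (if h ≡ v [MOD r] then (1 : ℂ) else 0)) - (x : ℂ) / r‖ ≤ 1 := by
    intro x
    have h1 := Nat.Ioc_filter_modEq_card 0 x hr v
    have hI : Finset.Icc 1 x = Finset.Ioc 0 x := by ext; simp [Nat.succ_le_iff]
    rw [Finset.sum_boole, hI]
    set c := (Finset.filter (fun h => h ≡ v [MOD r]) (Finset.Ioc 0 x)).card with hc
    have hrq : (0 : ℚ) < r := by exact_mod_cast hr
    have e : ((x : ℚ) - v) / r = x / r + (((0 : ℕ) : ℚ) - v) / r := by
      field_simp; push_cast; ring
    have hmono : ⌊(((0 : ℕ) : ℚ) - v) / (r : ℚ)⌋ ≤ ⌊((x : ℚ) - v) / (r : ℚ)⌋ := by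
      apply Int.floor_le_floor
      rw [e]
      have : (0 : ℚ) ≤ x / r := by positivity
      linarith
    rw [max_eq_left (by linarith)] at h1
    have h2 : (c : ℚ) = (⌊((x : ℚ) - v) / (r : ℚ)⌋ : ℚ) - ⌊(((0 : ℕ) : ℚ) - v) / (r : ℚ)⌋ := by
      exact_mod_cast h1
    have a1 := Int.floor_le (((x : ℚ) - v) / (r : ℚ))
    have a2 := Int.lt_floor_add_one (((x : ℚ) - v) / (r : ℚ))
    have a3 := Int.floor_le ((((0 : ℕ) : ℚ) - v) / (r : ℚ))
    have a4 := Int.lt_floor_add_one ((((0 : ℕ) : ℚ) - v) / (r : ℚ))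
    have h3 : |(c : ℚ) - x / r| ≤ 1 := by
      rw [abs_le]; constructor <;> linarith
    have h4 : |(c : ℝ) - x / r| ≤ 1 := by
      have h6 : (((|(c : ℚ) - x / r| : ℚ)) : ℝ) ≤ ((1 : ℚ) : ℝ) := Rat.cast_le.2 h3
      push_cast at h6
      exact h6
    have h5 : ((c : ℂ) - (x : ℂ) / r) = (((c : ℝ) - x / r : ℝ) : ℂ) := by push_cast; rfl
    rw [h5, Complex.norm_real]
    exact h4
  rw [tendsto_iff_norm_sub_tendsto_zero]
  refine squeeze_zero' (Eventually.of_forall fun _ => norm_nonneg _) ?_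
    (tendsto_one_div_atTop_nhds_zero_nat (𝕜 := ℝ))
  filter_upwards [eventually_gt_atTop 0] with x hx
  have hx' : (x : ℂ) ≠ 0 := by exact_mod_cast hx.ne'
  set S := ∑ h ∈ Finset.Icc 1 x, (if h ≡ v [MOD r] then (1 : ℂ) else 0) with hS
  have : 1 / (x : ℂ) * S - 1 / r = (1 / (x : ℂ)) * (S - x / r) := by
    field_simp
  rw [this, norm_mul]
  have k := key x
  have : ‖1 / (x : ℂ)‖ = 1 / (x : ℝ) := by simp
  rw [this]
  calc _ ≤ 1 / (x : ℝ) * 1 := by gcongr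
    _ = _ := by ring

lemma crt_cond (q d n : ℕ) (hq : 0 < q) (hd : d.gcd q ∣ n) :
    ∃ v, ∀ h, (q ∣ n + h ∧ d ∣ h) ↔ h ≡ v [MOD d.lcm q] := by
  have hc : 0 ≡ n * (q - 1) [MOD Nat.gcd d q] :=
    ((Nat.modEq_zero_iff_dvd).2 (hd.mul_right _)).symm
  obtain ⟨v, hv1, hv2⟩ := Nat.chineseRemainder' hc
  have e : n + n * (q - 1) = n * q := by
    obtain ⟨k, rfl⟩ : ∃ k, q = k + 1 := ⟨q - 1, by omega⟩
    simp; ring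
  have b1 : d ∣ v := (Nat.modEq_zero_iff_dvd).1 hv1
  have b2 : q ∣ n + v := by
    have := (hv2.add_left n)
    rw [e] at this
    exact (Nat.modEq_zero_iff_dvd).1 (this.trans ((Nat.modEq_zero_iff_dvd).2 (dvd_mul_left _ _)))
  refine ⟨v, fun h => ⟨fun ⟨h1, h2⟩ => ?_, fun hm => ?_⟩⟩
  · have c1 : h ≡ v [MOD d] :=
      ((Nat.modEq_zero_iff_dvd).2 h2).trans ((Nat.modEq_zero_iff_dvd).2 b1).symm
    have c2 : h ≡ v [MOD q] := Nat.ModEq.add_left_cancel' n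
      (((Nat.modEq_zero_iff_dvd).2 h1).trans ((Nat.modEq_zero_iff_dvd).2 b2).symm)
    rw [Nat.modEq_iff_dvd] at *
    rw [← Int.natCast_dvd_natCast] at *
    rw [Int.natCast_dvd] at *
    exact Nat.lcm_dvd c1 c2
  · constructor
    · have := (hm.of_dvd (Nat.dvd_lcm_right d q)).add_left n
      exact (this.dvd_iff dvd_rfl).2 b2
    · exact ((hm.of_dvd (Nat.dvd_lcm_left d q)).dvd_iff dvd_rfl).2 b1

open Filter Topology in
lemma mean_pair (q d n : ℕ) (hq : 0 < q) (hd : 0 < d) :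
    Tendsto (fun x : ℕ => (1 / (x : ℂ)) * ∑ h ∈ Finset.Icc 1 x,
      (if q ∣ n + h ∧ d ∣ h then (1 : ℂ) else 0)) atTop
      (𝓝 (if d.gcd q ∣ n then 1 / (d.lcm q : ℂ) else 0)) := by
  split_ifs with hg
  · obtain ⟨v, hv⟩ := crt_cond q d n hq hg
    simp_rw [hv]
    exact mean_modEq _ _ (Nat.lcm_pos hd hq)
  · have : ∀ h, ¬ (q ∣ n + h ∧ d ∣ h) := fun h ⟨h1, h2⟩ => hg
      ((Nat.dvd_add_left ((Nat.gcd_dvd_left d q).trans h2)).1 ((Nat.gcd_dvd_right d q).trans h1))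
    simp [this]

lemma moebius_gcd (F : ℕ → ℂ) (q ℓ : ℕ) (hq : 0 < q) (hℓ : 0 < ℓ) :
    ∑ d ∈ ℓ.divisors, (ArithmeticFunction.moebius (ℓ / d) : ℂ) * F (d.gcd q) =
      if ℓ ∣ q then ∑ d ∈ ℓ.divisors, (ArithmeticFunction.moebius (ℓ / d) : ℂ) * F d else 0 := by
  let F' : ℕ → ℂ := fun m => ∑ x ∈ m.divisorsAntidiagonal,
    (ArithmeticFunction.moebius x.1 : ℂ) * F x.2
  have h1 : ∀ n > 0, ∑ i ∈ n.divisors, F' i = F n :=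
    ArithmeticFunction.sum_eq_iff_sum_mul_moebius_eq.2 (fun n hn => rfl)
  have h2 : ∀ n > 0, ∑ i ∈ n.divisors, (if i ∣ q then F' i else 0) = F (n.gcd q) := by
    intro n hn
    rw [← h1 _ (Nat.gcd_pos_of_pos_right _ hq), ← Finset.sum_filter]
    congr 1
    ext i
    simp [Nat.dvd_gcd_iff, hn.ne', hq.ne']
  have h3 := (ArithmeticFunction.sum_eq_iff_sum_mul_moebius_eq
    (g := fun n => F (n.gcd q))).1 h2 ℓ hℓ
  have h4 : ∀ G : ℕ → ℂ, ∑ d ∈ ℓ.divisors, (ArithmeticFunction.moebius (ℓ / d) : ℂ) * G d =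
      ∑ x ∈ ℓ.divisorsAntidiagonal, (ArithmeticFunction.moebius x.1 : ℂ) * G x.2 := fun G =>
    (Nat.sum_divisorsAntidiagonal' (fun a b => (ArithmeticFunction.moebius a : ℂ) * G b)).symm
  rw [h4 (fun d => F (d.gcd q)), h4 F]
  exact h3

lemma ramanujanSum_eq (ℓ n : ℕ) (hℓ : 0 < ℓ) : (ramanujanSum ℓ (n : ℤ) : ℂ) =
    ∑ d ∈ ℓ.divisors, (ArithmeticFunction.moebius (ℓ / d) : ℂ) * (if d ∣ n then (d : ℂ) else 0) := by
  unfold ramanujanSum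
  push_cast
  simp_rw [mul_ite, mul_zero]
  rw [← Finset.sum_filter]
  apply Finset.sum_congr
  · ext i
    simp [Nat.dvd_gcd_iff, hℓ.ne']
  · intros; ring

open Filter Topology in
lemma mean_ram (q n ℓ : ℕ) (hq : 0 < q) (hℓ : 0 < ℓ) :
    Tendsto (fun x : ℕ => (1 / (x : ℂ)) * ∑ h ∈ Finset.Icc 1 x,
      (if q ∣ n + h then (1 : ℂ) else 0) * (ramanujanSum ℓ (h : ℤ) : ℂ)) atTop
      (𝓝 (if ℓ ∣ q then (ramanujanSum ℓ (n : ℤ) : ℂ) / q else 0)) := by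
  have h1 : Tendsto (fun x : ℕ => ∑ d ∈ ℓ.divisors,
      ((ArithmeticFunction.moebius (ℓ / d) : ℂ) * d) * ((1 / (x : ℂ)) * ∑ h ∈ Finset.Icc 1 x,
      (if q ∣ n + h ∧ d ∣ h then (1 : ℂ) else 0))) atTop
      (𝓝 (∑ d ∈ ℓ.divisors, ((ArithmeticFunction.moebius (ℓ / d) : ℂ) * d) *
        (if d.gcd q ∣ n then 1 / (d.lcm q : ℂ) else 0))) :=
    tendsto_finsetSum _ fun d hd => (mean_pair q d n hq (Nat.pos_of_mem_divisors hd)).const_mul _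
  convert h1 using 2 with x
  · rw [Finset.mul_sum]
    simp_rw [Finset.mul_sum]
    rw [Finset.sum_comm]
    refine Finset.sum_congr rfl fun h _ => ?_
    rw [ramanujanSum_eq _ _ hℓ, Finset.mul_sum, Finset.mul_sum]
    refine Finset.sum_congr rfl fun d _ => ?_
    by_cases a : q ∣ n + h <;> by_cases b : d ∣ h <;> simp [a, b]
    ring
  · have h2 := moebius_gcd (fun d => if d ∣ n then (d : ℂ) else 0) q ℓ hq hℓ
    rw [← ramanujanSum_eq _ _ hℓ] at h2
    have h3 : (if ℓ ∣ q then (ramanujanSum ℓ (n : ℤ) : ℂ) / q else 0) =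
      (if ℓ ∣ q then (ramanujanSum ℓ (n : ℤ) : ℂ) else 0) / q := by split_ifs <;> simp
    rw [h3, ← h2, Finset.sum_div]
    refine Finset.sum_congr rfl fun d hd => ?_
    have hd0 := Nat.pos_of_mem_divisors hd
    have e : (d.gcd q : ℂ) * d.lcm q = d * q := by exact_mod_cast Nat.gcd_mul_lcm d q
    have l0 : (d.lcm q : ℂ) ≠ 0 := by exact_mod_cast (Nat.lcm_pos hd0 hq).ne'
    have q0 : (q : ℂ) ≠ 0 := by exact_mod_cast hq.ne'
    split_ifs
    · field_simp
      rw [mul_assoc, e]; ring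
    · simp

/-- let `N` be a positive integer, `f : ℕ → ℂ` arbitrary and
`g` a truncated divisor sum `g(m) = ∑_{q ∣ m, q ≤ Q} g'(q)` of range `Q`.
Then for every positive integer `ℓ` the limit
`lim_{x→∞} (1/x) ∑_{h ≤ x} C_{f,g}(N,h) c_ℓ(h)` exists and equals
`ĝ(ℓ) ∑_{n ≤ N} f(n) c_ℓ(n)`, where `C_{f,g}(N,h) = ∑_{n ≤ N} f(n) g(n+h)`
and `ĝ(ℓ) = ∑_{m ≤ Q, ℓ ∣ m} g'(m)/m`. -/
theorem correlation_shift_coefficient_limit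
    (N Q : ℕ) (hN : 0 < N) (hQ : 0 < Q)
    (f g g' : ℕ → ℂ)
    (hg : ∀ m : ℕ, 0 < m → g m = ∑ q ∈ m.divisors.filter (· ≤ Q), g' q)
    (ℓ : ℕ) (hℓ : 0 < ℓ) :
    Filter.Tendsto
      (fun x : ℕ => (1 / (x : ℂ)) *
        ∑ h ∈ Finset.Icc 1 x,
          (∑ n ∈ Finset.Icc 1 N, f n * g (n + h)) * (ramanujanSum ℓ (h : ℤ) : ℂ))
      Filter.atTop
      (nhds ((∑ m ∈ (Finset.Icc 1 Q).filter (ℓ ∣ ·), g' m / (m : ℂ)) *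
        ∑ n ∈ Finset.Icc 1 N, f n * (ramanujanSum ℓ (n : ℤ) : ℂ))) := by
  have h1 : Filter.Tendsto (fun x : ℕ => ∑ q ∈ Finset.Icc 1 Q, ∑ n ∈ Finset.Icc 1 N,
      (g' q * f n) * ((1 / (x : ℂ)) * ∑ h ∈ Finset.Icc 1 x,
      (if q ∣ n + h then (1 : ℂ) else 0) * (ramanujanSum ℓ (h : ℤ) : ℂ))) Filter.atTop
      (nhds (∑ q ∈ Finset.Icc 1 Q, ∑ n ∈ Finset.Icc 1 N,
      (g' q * f n) * (if ℓ ∣ q then (ramanujanSum ℓ (n : ℤ) : ℂ) / q else 0))) :=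
    tendsto_finsetSum _ fun q hq => tendsto_finsetSum _ fun n _ =>
      (mean_ram q n ℓ (Finset.mem_Icc.1 hq).1 hℓ).const_mul _
  convert h1 using 2 with x
  · have hg2 : ∀ m : ℕ, 0 < m → g m = ∑ q ∈ Finset.Icc 1 Q, if q ∣ m then g' q else 0 := by
      intro m hm
      rw [hg m hm, ← Finset.sum_filter]
      congr 1
      ext i
      simp only [Finset.mem_filter, Nat.mem_divisors, Finset.mem_Icc]
      constructor
      · rintro ⟨⟨a, b⟩, c⟩
        exact ⟨⟨Nat.pos_of_dvd_of_pos a hm, c⟩, a⟩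
      · rintro ⟨⟨a, b⟩, c⟩
        exact ⟨⟨c, hm.ne'⟩, b⟩
    rw [Finset.mul_sum]
    simp_rw [Finset.mul_sum]
    have s1 : ∀ q ∈ Finset.Icc 1 Q, (∑ n ∈ Finset.Icc 1 N, ∑ h ∈ Finset.Icc 1 x,
        g' q * f n * (1 / (x : ℂ) * ((if q ∣ n + h then (1 : ℂ) else 0) *
          (ramanujanSum ℓ (h : ℤ) : ℂ)))) = ∑ h ∈ Finset.Icc 1 x, ∑ n ∈ Finset.Icc 1 N,
        g' q * f n * (1 / (x : ℂ) * ((if q ∣ n + h then (1 : ℂ) else 0) *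
          (ramanujanSum ℓ (h : ℤ) : ℂ))) := fun q _ => Finset.sum_comm
    rw [Finset.sum_congr rfl s1, Finset.sum_comm]
    refine Finset.sum_congr rfl fun h hh => ?_
    rw [Finset.sum_comm, Finset.sum_mul, Finset.mul_sum]
    refine Finset.sum_congr rfl fun n hn => ?_
    rw [hg2 (n + h) (by have := (Finset.mem_Icc.1 hh).1; omega), Finset.mul_sum, Finset.sum_mul,
      Finset.mul_sum]
    refine Finset.sum_congr rfl fun q _ => ?_
    split_ifs <;> ring
  · rw [Finset.sum_filter, Finset.sum_mul]
    refine Finset.sum_congr rfl fun q _ => ?_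
    rw [Finset.mul_sum]
    refine Finset.sum_congr rfl fun n _ => ?_
    split_ifs <;> ring
end

section
/- Let N be a positive integer, let f be a sieve function of range D and g a sieve function of range Q with D ≤ Q and DQ ≪ N. Then, uniformly in the shift h ≥ 0, C_{f,g}(N,h) = 𝔖_{f,g}(h)·N + O_ε((DQ)^{1+ε}) for every ε > 0. In particular, if DQ ≪ N^{1−δ} for some fixed δ > ε, this is an asymptotic formula. -/
/-- The Ramanujan coefficient `f̂(q) = ∑_{m ≤ Q, q ∣ m} f'(m)/m` of a sieve
function of range `Q` with Eratosthenes transform `f'`. -/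
noncomputable def rCoeff (Q : ℕ) (f' : ℕ → ℂ) (q : ℕ) : ℂ :=
  ∑ m ∈ (Finset.Icc 1 Q).filter (q ∣ ·), f' m / (m : ℂ)

/-- The singular series `𝔖_{f,g}(h) = ∑_{q ≥ 1} f̂(q) ĝ(q) c_q(h)`, for `f` of
range `D` and `g` of range `Q`. -/
noncomputable def singularSeries (D Q : ℕ) (f' g' : ℕ → ℂ) (h : ℕ) : ℂ :=
  ∑' q : ℕ, if 1 ≤ q then rCoeff D f' q * rCoeff Q g' q * (ramanujanSum q (h : ℤ) : ℂ) else 0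

lemma modEq_lcm_iff (a b m n : ℕ) :
    (a ≡ b [MOD m] ∧ a ≡ b [MOD n]) ↔ a ≡ b [MOD m.lcm n] := by
  constructor
  · rintro ⟨h1, h2⟩
    rw [Nat.modEq_iff_dvd] at *
    rw [Int.natCast_dvd] at *
    exact Nat.lcm_dvd h1 h2
  · intro h
    exact ⟨h.of_dvd (Nat.dvd_lcm_left m n), h.of_dvd (Nat.dvd_lcm_right m n)⟩

open ArithmeticFunction in
lemma sum_ramanujanSum (h m : ℕ) (hm : 0 < m) :
    ∑ l ∈ m.divisors, ramanujanSum l (h : ℤ) = if m ∣ h then (m : ℤ) else 0 := by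
  revert m
  apply (ArithmeticFunction.sum_eq_iff_sum_mul_moebius_eq
    (f := fun l => ramanujanSum l (h : ℤ)) (g := fun m => if m ∣ h then (m : ℤ) else 0)).2
  intro n hn
  simp only [Int.cast_id]
  rw [Nat.sum_divisorsAntidiagonal' (f := fun a b => ((moebius a : ℤ) : ℤ) * (if b ∣ h then (b : ℤ) else 0))]
  unfold ramanujanSum
  simp only [mul_ite, mul_zero, Int.natAbs_natCast]
  rw [← Finset.sum_filter]
  have : (n.gcd h).divisors = n.divisors.filter (· ∣ h) := by
    ext d
    have : n.gcd h ≠ 0 := (Nat.gcd_pos_of_pos_left _ hn).ne'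
    simp [Nat.dvd_gcd_iff, hn.ne', this]
    try omega
  rw [this]
  apply Finset.sum_congr rfl
  intro d _
  simp [mul_comm]

lemma count_bound (N h d q : ℕ) (hd : 0 < d) (hq : 0 < q) :
    |(((Finset.Icc 1 N).filter (fun n => d ∣ n ∧ q ∣ n + h)).card : ℝ)
      - N * ((if d.gcd q ∣ h then (d.gcd q : ℝ) else 0) / (d * q))| ≤ 1 := by
  split_ifs with hg
  · have hmod : 0 ≡ (q - 1) * h [MOD d.gcd q] :=
      ((Nat.modEq_zero_iff_dvd).2 (hg.mul_left _)).symm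
    obtain ⟨v, hv1, hv2⟩ := Nat.chineseRemainder' hmod
    have hv1' : d ∣ v := (Nat.modEq_zero_iff_dvd).1 hv1
    have hv2' : q ∣ v + h := by
      have := hv2.add_right h
      have e : (q - 1) * h + h = q * h := by
        obtain ⟨k, rfl⟩ : ∃ k, q = k + 1 := ⟨q - 1, by omega⟩
        simp; ring
      rw [e] at this
      exact (Nat.modEq_zero_iff_dvd).1 (this.trans ((Nat.modEq_zero_iff_dvd).2 (dvd_mul_right _ _)))
    have hL : 0 < d.lcm q := Nat.lcm_pos hd hq
    have hset : (Finset.Icc 1 N).filter (fun n => d ∣ n ∧ q ∣ n + h)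
        = (Finset.Ioc 0 N).filter (fun n => n ≡ v [MOD d.lcm q]) := by
      ext n
      simp only [Finset.mem_filter, Finset.mem_Icc, Finset.mem_Ioc, Nat.succ_le_iff]
      refine and_congr_right fun _ => ?_
      rw [← modEq_lcm_iff]
      constructor
      · rintro ⟨a, b⟩
        refine ⟨((Nat.modEq_zero_iff_dvd).2 a).trans ((Nat.modEq_zero_iff_dvd).2 hv1').symm, ?_⟩
        exact Nat.ModEq.add_right_cancel' h
          (((Nat.modEq_zero_iff_dvd).2 b).trans ((Nat.modEq_zero_iff_dvd).2 hv2').symm)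
      · rintro ⟨a, b⟩
        exact ⟨(Nat.modEq_zero_iff_dvd).1 (a.trans ((Nat.modEq_zero_iff_dvd).2 hv1')),
          (Nat.modEq_zero_iff_dvd).1 ((b.add_right h).trans ((Nat.modEq_zero_iff_dvd).2 hv2'))⟩
    have hcard := Nat.Ioc_filter_modEq_card 0 N hL v
    rw [← hset] at hcard
    have hgl : (d.gcd q : ℝ) * (d.lcm q : ℝ) = d * q := by exact_mod_cast Nat.gcd_mul_lcm d q
    have hLR : (0 : ℝ) < d.lcm q := by exact_mod_cast hL
    have hGR : (0 : ℝ) < d.gcd q := by exact_mod_cast Nat.gcd_pos_of_pos_left _ hd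
    have e : (N : ℝ) * ((d.gcd q : ℝ) / (d * q)) = N / d.lcm q := by
      rw [← hgl]; field_simp
    rw [e]
    set c := ((Finset.Icc 1 N).filter (fun n => d ∣ n ∧ q ∣ n + h)).card
    set L := d.lcm q
    set x : ℚ := ((N : ℚ) - v) / L with hx
    set y : ℚ := (((0 : ℕ) : ℚ) - v) / L with hy
    have hLQ : (0 : ℚ) < L := by exact_mod_cast hL
    have hxy : x - y = N / L := by rw [hx, hy]; push_cast; ring
    have hyx : y ≤ x := by
      have : (0 : ℚ) ≤ N / L := by positivity
      linarith
    rw [max_eq_left (sub_nonneg.2 (Int.floor_mono hyx))] at hcard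
    have hcq : (c : ℚ) = ⌊x⌋ - ⌊y⌋ := by exact_mod_cast hcard
    have key : |(c : ℚ) - N / L| ≤ 1 := by
      rw [hcq, ← hxy, abs_le]
      have := Int.floor_le x
      have := Int.floor_le y
      have := Int.lt_floor_add_one x
      have := Int.lt_floor_add_one y
      constructor <;> linarith
    have : ((|(c : ℚ) - N / L| : ℚ) : ℝ) ≤ ((1 : ℚ) : ℝ) := by exact_mod_cast key
    push_cast at this
    exact this
  · have : (Finset.Icc 1 N).filter (fun n => d ∣ n ∧ q ∣ n + h) = ∅ := by
      apply Finset.filter_eq_empty_iff.2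
      rintro n _ ⟨a, b⟩
      exact hg ((Nat.dvd_add_right ((Nat.gcd_dvd_left d q).trans a)).1
        ((Nat.gcd_dvd_right d q).trans b))
    rw [this]; simp

lemma singularSeries_eq (D Q : ℕ) (f' g' : ℕ → ℂ) (h : ℕ) :
    singularSeries D Q f' g' h = ∑ d ∈ Finset.Icc 1 D, ∑ q ∈ Finset.Icc 1 Q,
      f' d * g' q * (((if d.gcd q ∣ h then (d.gcd q : ℝ) else 0) / (d * q) : ℝ) : ℂ) := by
  unfold singularSeries
  rw [tsum_eq_sum (s := Finset.Icc 1 D)]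
  · have : ∀ l ∈ Finset.Icc 1 D, (if 1 ≤ l then rCoeff D f' l * rCoeff Q g' l *
        (ramanujanSum l (h : ℤ) : ℂ) else 0) = ∑ d ∈ Finset.Icc 1 D, ∑ q ∈ Finset.Icc 1 Q,
        (if l ∣ d ∧ l ∣ q then
          f' d * g' q / (d * q) * (ramanujanSum l (h : ℤ) : ℂ) else 0) := by
      intro l hl
      rw [if_pos (Finset.mem_Icc.1 hl).1]
      unfold rCoeff
      rw [Finset.sum_filter, Finset.sum_filter, Finset.sum_mul_sum, Finset.sum_mul]
      refine Finset.sum_congr rfl fun d _ => ?_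
      rw [Finset.sum_mul]
      refine Finset.sum_congr rfl fun q _ => ?_
      by_cases h1 : l ∣ d <;> by_cases h2 : l ∣ q <;> simp [h1, h2]
      left
      rw [div_mul_div_comm]
    rw [Finset.sum_congr rfl this, Finset.sum_comm]
    refine Finset.sum_congr rfl fun d hd => ?_
    rw [Finset.sum_comm]
    refine Finset.sum_congr rfl fun q hq => ?_
    rw [Finset.mem_Icc] at hd hq
    rw [← Finset.sum_filter]
    have hG : 0 < d.gcd q := Nat.gcd_pos_of_pos_left _ hd.1
    have hset : (Finset.Icc 1 D).filter (fun l => l ∣ d ∧ l ∣ q) = (d.gcd q).divisors := by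
      ext l
      simp only [Finset.mem_filter, Finset.mem_Icc, Nat.mem_divisors, Nat.dvd_gcd_iff]
      constructor
      · rintro ⟨_, b⟩
        exact ⟨b, hG.ne'⟩
      · rintro ⟨b, _⟩
        exact ⟨⟨Nat.pos_of_dvd_of_pos b.1 hd.1, (Nat.le_of_dvd hd.1 b.1).trans hd.2⟩, b⟩
    rw [hset, ← Finset.mul_sum, ← Int.cast_sum, sum_ramanujanSum h _ hG]
    split_ifs <;> push_cast <;> ring
  · intro l hl
    split_ifs with h1
    · have : rCoeff D f' l = 0 := by
        unfold rCoeff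
        rw [Finset.filter_eq_empty_iff.2, Finset.sum_empty]
        intro m hm hlm
        rw [Finset.mem_Icc] at hm hl
        exact hl ⟨h1, (Nat.le_of_dvd hm.1 hlm).trans hm.2⟩
      simp [this]
    · rfl

lemma corr_eq (N D Q h : ℕ) (f' g' : ℕ → ℂ) :
    (∑ n ∈ Finset.Icc 1 N,
            (∑ d ∈ n.divisors.filter (· ≤ D), f' d) *
              (∑ d ∈ (n + h).divisors.filter (· ≤ Q), g' d))
    = ∑ d ∈ Finset.Icc 1 D, ∑ q ∈ Finset.Icc 1 Q,
      f' d * g' q * (((((Finset.Icc 1 N).filter (fun n => d ∣ n ∧ q ∣ n + h)).card : ℝ)) : ℂ) := by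
  have key : ∀ (R m : ℕ) (F : ℕ → ℂ), 0 < m → ∑ d ∈ m.divisors.filter (· ≤ R), F d
      = ∑ d ∈ Finset.Icc 1 R, if d ∣ m then F d else 0 := by
    intro R m F hm
    rw [← Finset.sum_filter]
    congr 1
    ext d
    simp only [Finset.mem_filter, Finset.mem_Icc, Nat.mem_divisors]
    constructor
    · rintro ⟨⟨a, _⟩, b⟩
      exact ⟨⟨Nat.pos_of_dvd_of_pos a hm, b⟩, a⟩
    · rintro ⟨⟨_, b⟩, a⟩
      exact ⟨⟨a, hm.ne'⟩, b⟩
  have h1 : ∀ n ∈ Finset.Icc 1 N, (∑ d ∈ n.divisors.filter (· ≤ D), f' d) *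
              (∑ d ∈ (n + h).divisors.filter (· ≤ Q), g' d) =
      ∑ d ∈ Finset.Icc 1 D, ∑ q ∈ Finset.Icc 1 Q,
        if d ∣ n ∧ q ∣ n + h then f' d * g' q else 0 := by
    intro n hn
    rw [Finset.mem_Icc] at hn
    rw [key D n f' (by omega), key Q (n + h) g' (by omega), Finset.sum_mul_sum]
    refine Finset.sum_congr rfl fun d _ => Finset.sum_congr rfl fun q _ => ?_
    by_cases h1 : d ∣ n <;> by_cases h2 : q ∣ n + h <;> simp [h1, h2]
  rw [Finset.sum_congr rfl h1, Finset.sum_comm]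
  refine Finset.sum_congr rfl fun d _ => ?_
  rw [Finset.sum_comm]
  refine Finset.sum_congr rfl fun q _ => ?_
  rw [← Finset.sum_filter, Finset.sum_const, nsmul_eq_mul, mul_comm]
  simp

/-- let `N` be a positive integer, `f` a sieve function of range
`D` and `g` a sieve function of range `Q`, with `D ≤ Q` and `DQ ≪ N`.  Then,
uniformly in the shift `h ≥ 0`,
`C_{f,g}(N,h) = 𝔖_{f,g}(h) N + O_ε((DQ)^{1+ε})` for every `ε > 0`, where
`C_{f,g}(N,h) = ∑_{n ≤ N} f(n) g(n+h)`. -/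
theorem correlation_of_sieve_functions
    (f' g' : ℕ → ℂ)
    (hf' : ∀ ε : ℝ, 0 < ε → ∃ c : ℝ, 0 < c ∧ ∀ q : ℕ, 1 ≤ q → ‖f' q‖ ≤ c * (q : ℝ) ^ ε)
    (hg' : ∀ ε : ℝ, 0 < ε → ∃ c : ℝ, 0 < c ∧ ∀ q : ℕ, 1 ≤ q → ‖g' q‖ ≤ c * (q : ℝ) ^ ε)
    (ε : ℝ) (hε : 0 < ε) (A : ℝ) (hA : 0 < A) :
    ∃ C : ℝ, 0 < C ∧ ∀ N D Q h : ℕ, 0 < N → 0 < D → 0 < Q → D ≤ Q →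
      ((D : ℝ) * Q ≤ A * N) →
      ‖(∑ n ∈ Finset.Icc 1 N,
            (∑ d ∈ n.divisors.filter (· ≤ D), f' d) *
              (∑ d ∈ (n + h).divisors.filter (· ≤ Q), g' d))
          - singularSeries D Q f' g' h * (N : ℂ)‖
        ≤ C * ((D : ℝ) * Q) ^ (1 + ε) := by
  obtain ⟨a, ha, hfa⟩ := hf' ε hε
  obtain ⟨b, hb, hgb⟩ := hg' ε hε
  refine ⟨a * b, by positivity, ?_⟩
  intro N D Q h _ hD hQ _ _
  rw [corr_eq, singularSeries_eq, Finset.sum_mul, ← Finset.sum_sub_distrib]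
  have hDR : (0 : ℝ) < D := by exact_mod_cast hD
  have hQR : (0 : ℝ) < Q := by exact_mod_cast hQ
  have hterm : ∀ d ∈ Finset.Icc 1 D, ∀ q ∈ Finset.Icc 1 Q,
      ‖f' d * g' q * (((((Finset.Icc 1 N).filter (fun n => d ∣ n ∧ q ∣ n + h)).card : ℝ)) : ℂ)
        - f' d * g' q * (((if d.gcd q ∣ h then (d.gcd q : ℝ) else 0) / (d * q) : ℝ) : ℂ) * (N : ℂ)‖
      ≤ (a * (D : ℝ) ^ ε) * (b * (Q : ℝ) ^ ε) := by
    intro d hd q hq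
    rw [Finset.mem_Icc] at hd hq
    have hc := count_bound N h d q hd.1 hq.1
    have e : f' d * g' q * (((((Finset.Icc 1 N).filter (fun n => d ∣ n ∧ q ∣ n + h)).card : ℝ)) : ℂ)
        - f' d * g' q * (((if d.gcd q ∣ h then (d.gcd q : ℝ) else 0) / (d * q) : ℝ) : ℂ) * (N : ℂ)
        = f' d * g' q * ((((((Finset.Icc 1 N).filter (fun n => d ∣ n ∧ q ∣ n + h)).card : ℝ))
          - N * ((if d.gcd q ∣ h then (d.gcd q : ℝ) else 0) / (d * q)) : ℝ) : ℂ) := by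
      rw [Complex.ofReal_sub, Complex.ofReal_mul, Complex.ofReal_natCast N]
      ring
    rw [e, norm_mul, norm_mul, Complex.norm_real, Real.norm_eq_abs]
    have h1 : ‖f' d‖ ≤ a * (D : ℝ) ^ ε := (hfa d hd.1).trans (by
      have : (d : ℝ) ≤ D := by exact_mod_cast hd.2
      gcongr)
    have h2 : ‖g' q‖ ≤ b * (Q : ℝ) ^ ε := (hgb q hq.1).trans (by
      have : (q : ℝ) ≤ Q := by exact_mod_cast hq.2
      gcongr)
    calc _ ≤ ‖f' d‖ * ‖g' q‖ * 1 := by gcongr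
      _ ≤ _ := by rw [mul_one]; gcongr
  calc _ ≤ ∑ d ∈ Finset.Icc 1 D, ∑ q ∈ Finset.Icc 1 Q,
        (a * (D : ℝ) ^ ε) * (b * (Q : ℝ) ^ ε) := by
        refine (norm_sum_le _ _).trans (Finset.sum_le_sum fun d hd => ?_)
        rw [Finset.sum_mul, ← Finset.sum_sub_distrib]
        exact (norm_sum_le _ _).trans (Finset.sum_le_sum fun q hq => hterm d hd q hq)
    _ = a * b * ((D : ℝ) * Q) ^ (1 + ε) := by
        rw [Real.rpow_add (by positivity), Real.rpow_one, Real.mul_rpow hDR.le hQR.le]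
        simp
        ring
end
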